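/- Let Λ be an Iwanaga–Gorenstein finite-dimensional algebra over an algebraically closed field K, i.e., Λ has finite self-injective dimension both as a right and as a left Λ-module. Then the stable category of the category of Cohen–Macaulay Λ-modules admits no non-zero silting object. -/

import Mathlib

/- Formalization of statements from
   "Report on the finiteness of silting objects"
   by T. Aihara, T. Honma, K. Miyamoto, Q. Wang. -/

open CategoryTheory CategoryTheory.Limits

universe u v w

noncomputable section
namespace PaperSilting
/-! ### Silting theory in triangulated categories. -/

open Pretriangulated

section Triangulated

variable {C : Type u} [Category.{v} C] [Preadditive C] [HasZeroObject C] [HasShift C ℤ]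
  [∀ n : ℤ, (shiftFunctor C n).Additive] [Pretriangulated C]

/-- A class of objects of a triangulated category is thick: it is closed under
isomorphisms, shifts, cones and direct summands (retracts). -/
structure IsThickClass (P : C → Prop) : Prop where
  iso : ∀ {X Y : C}, (X ≅ Y) → P X → P Y
  shift : ∀ (X : C) (n : ℤ), P X → P (X⟦n⟧)
  cone : ∀ T ∈ distTriang C, P T.obj₁ → P T.obj₂ → P T.obj₃
  retract : ∀ (X Y : C) (i : X ⟶ Y) (r : Y ⟶ X), i ≫ r = 𝟙 X → P Y → P X

/-- `X` belongs to the smallest thick subcategory containing `S`. -/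
def InThick (S : Set C) (X : C) : Prop :=
  ∀ P : C → Prop, IsThickClass P → (∀ Y ∈ S, P Y) → P X

/-- A presilting object: `Hom(M, M[n]) = 0` for all `n > 0`. -/
def IsPresiltingObj (M : C) : Prop := ∀ n : ℤ, 0 < n → ∀ f : M ⟶ M⟦n⟧, f = 0

/-- A pretilting object: `Hom(M, M[n]) = 0` for all `n ≠ 0`. -/
def IsPretiltingObj (M : C) : Prop := ∀ n : ℤ, n ≠ 0 → ∀ f : M ⟶ M⟦n⟧, f = 0

/-- A silting object of the triangulated category `C`. -/
def IsSiltingObj (M : C) : Prop := IsPresiltingObj M ∧ ∀ X : C, InThick {M} X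

/-- A silting object of the thick subcategory of `C` determined by the class `S`. -/
def IsSiltingFor (S : C → Prop) (M : C) : Prop :=
  S M ∧ IsPresiltingObj M ∧ ∀ X : C, S X → InThick {M} X

/-- A tilting object of the thick subcategory of `C` determined by the class `S`. -/
def IsTiltingFor (S : C → Prop) (M : C) : Prop :=
  S M ∧ IsPretiltingObj M ∧ ∀ X : C, S X → InThick {M} X

/-- A basic object: it has no direct summand of the form `Y ⊕ Y` with `Y ≠ 0`. -/
def IsBasicObj (M : C) : Prop :=
  ∀ (Y : C) (i₁ i₂ : Y ⟶ M) (p₁ p₂ : M ⟶ Y),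
    i₁ ≫ p₁ = 𝟙 Y → i₂ ≫ p₂ = 𝟙 Y → i₁ ≫ p₂ = 0 → i₂ ≫ p₁ = 0 → IsZero Y

end Triangulated

/-! ### The homotopy category of complexes of modules; perfect complexes. -/

/-- The homotopy category of (unbounded) cochain complexes of `R`-modules.
Its full subcategory of bounded complexes of finitely generated projectives is
`K^b(proj R)`, and its full subcategory of right-bounded complexes of finitely
generated projectives with bounded cohomology is a model for `D^b(mod R)`. -/
abbrev HtpyCat (R : Type) [Ring R] :=
  HomotopyCategory (ModuleCat.{0} R) (ComplexShape.up ℤ)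

/-- The object of the homotopy category attached to a complex. -/
def ofComplex (R : Type) [Ring R] (P : CochainComplex (ModuleCat.{0} R) ℤ) : HtpyCat R :=
  (HomotopyCategory.quotient _ _).obj P

/-- A perfect object: isomorphic to a bounded complex of finitely generated
projective modules.  These are the objects of `K^b(proj R)`. -/
def IsPerfObj (R : Type) [Ring R] (X : HtpyCat R) : Prop :=
  ∃ P : CochainComplex (ModuleCat.{0} R) ℤ,
    (∀ i, Projective (P.X i) ∧ Module.Finite R (P.X i)) ∧
    (∃ a b : ℤ, ∀ i, i < a ∨ b < i → IsZero (P.X i)) ∧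
    Nonempty (X ≅ ofComplex R P)

/-- An object of (the standard model `K^{-,b}(proj R)` of) the bounded derived
category `D^b(mod R)`: isomorphic to a right-bounded complex of finitely
generated projective modules with bounded cohomology. -/
def IsDbObj (R : Type) [Ring R] (X : HtpyCat R) : Prop :=
  ∃ P : CochainComplex (ModuleCat.{0} R) ℤ,
    (∀ i, Projective (P.X i) ∧ Module.Finite R (P.X i)) ∧
    (∃ b : ℤ, ∀ i, b < i → IsZero (P.X i)) ∧
    (∃ a : ℤ, ∀ i, i < a → P.ExactAt i) ∧
    Nonempty (X ≅ ofComplex R P)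

/-- An object of the homotopy category presented by a complex of finitely
generated projectives concentrated in the `m` degrees `-m < i ≤ 0`. -/
def IsMTermObj (R : Type) [Ring R] (m : ℕ) (X : HtpyCat R) : Prop :=
  ∃ P : CochainComplex (ModuleCat.{0} R) ℤ,
    (∀ i, Projective (P.X i) ∧ Module.Finite R (P.X i)) ∧
    (∀ i : ℤ, 0 < i ∨ i ≤ -(m : ℤ) → IsZero (P.X i)) ∧
    Nonempty (X ≅ ofComplex R P)

/-- The stalk complex of the regular module `R`, placed in degree `0`. -/
def stalkRing (R : Type) [Ring R] : HtpyCat R :=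
  ofComplex R
    ((HomologicalComplex.single (ModuleCat.{0} R) (ComplexShape.up ℤ) 0).obj (ModuleCat.of R R))

/-- The regular module `R` has finite injective dimension: it admits a finite
injective coresolution. -/
def HasFiniteSelfInjDim (R : Type) [Ring R] : Prop :=
  ∃ (n : ℕ) (I : CochainComplex (ModuleCat.{0} R) ℤ)
    (φ : (HomologicalComplex.single (ModuleCat.{0} R) (ComplexShape.up ℤ) 0).obj
          (ModuleCat.of R R) ⟶ I),
    (∀ i, Injective (I.X i)) ∧ (∀ i : ℤ, i < 0 ∨ (n : ℤ) < i → IsZero (I.X i)) ∧ QuasiIso φ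

/-- For a selfinjective (more generally Iwanaga–Gorenstein) ring, the stable
category of Cohen–Macaulay modules is modelled by acyclic (equivalently,
totally acyclic) complexes of finitely generated projectives (Buchweitz). -/
def IsCMStableObj (R : Type) [Ring R] (X : HtpyCat R) : Prop :=
  ∃ P : CochainComplex (ModuleCat.{0} R) ℤ,
    (∀ i, Projective (P.X i) ∧ Module.Finite R (P.X i)) ∧
    (∀ i, P.ExactAt i) ∧ Nonempty (X ≅ ofComplex R P)

/-- `R` is tilting-discrete: for every `m > 0` there are only finitely many
basic `m`-term tilting objects in `K^b(proj R)` up to isomorphism. -/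
def IsTiltingDiscreteRing (R : Type) [Ring R] : Prop :=
  ∀ m : ℕ, 0 < m → ∃ (k : ℕ) (f : Fin k → HtpyCat R),
    ∀ X : HtpyCat R, IsTiltingFor (IsPerfObj R) X → IsMTermObj R m X → IsBasicObj X →
      ∃ i, Nonempty (X ≅ f i)

/-- A (selfinjective) algebra `Λ` is tilting-discrete (with respect to right modules). -/
def IsTiltingDiscrete (Λ : Type) [Ring Λ] : Prop := IsTiltingDiscreteRing Λᵐᵒᵖ

/-! ### Elementary homological algebra -/

lemma lift_inj {R : Type} [Ring R] {B V I W : Type} [AddCommGroup B] [AddCommGroup V]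
    [AddCommGroup I] [AddCommGroup W] [Module R B] [Module R V] [Module R I] [Module R W]
    (i : V →ₗ[R] I) (p : I →ₗ[R] W) (hi : Function.Injective i) (he : Function.Exact i p)
    (h : B →ₗ[R] I) (hh : ∀ b, p (h b) = 0) : ∃ h' : B →ₗ[R] V, ∀ b, i (h' b) = h b := by
  have hr : ∀ b, h b ∈ LinearMap.range i := fun b => by
    obtain ⟨v, hv⟩ := (he (h b)).1 (hh b)
    exact ⟨v, hv⟩
  refine ⟨(LinearEquiv.ofInjective i hi).symm.toLinearMap ∘ₗ h.codRestrict _ hr, fun b => ?_⟩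
  have := LinearEquiv.apply_symm_apply (LinearEquiv.ofInjective i hi) (h.codRestrict _ hr b)
  exact congrArg Subtype.val this

/-- maps out of `F` killing the kernel of a surjection descend. -/
lemma desc_surj {R : Type} [Ring R] {F V W : Type} [AddCommGroup F] [AddCommGroup V]
    [AddCommGroup W] [Module R F] [Module R V] [Module R W]
    (p : F →ₗ[R] V) (hp : Function.Surjective p)
    (h : F →ₗ[R] W) (hh : ∀ b, p b = 0 → h b = 0) : ∃ h' : V →ₗ[R] W, ∀ b, h' (p b) = h b := by
  have hle : LinearMap.ker p ≤ LinearMap.ker h := fun b hb => hh b hb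
  refine ⟨(Submodule.liftQ _ h hle) ∘ₗ (p.quotKerEquivOfSurjective hp).symm.toLinearMap,
    fun b => ?_⟩
  have : (p.quotKerEquivOfSurjective hp).symm (p b) = Submodule.Quotient.mk b := by
    rw [LinearEquiv.symm_apply_eq]; rfl
  simp [this]

/-- Extension property with respect to a map. -/
def ExtProp {R : Type} [Ring R] {A B : ModuleCat.{0} R} (d : A →ₗ[R] B)
    (V : ModuleCat.{0} R) : Prop :=
  ∀ f : A →ₗ[R] V, (∀ a, d a = 0 → f a = 0) → ∃ g : B →ₗ[R] V, ∀ a, g (d a) = f a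

def InjMod {R : Type} [Ring R] (V : ModuleCat.{0} R) : Prop :=
  ∀ (A B : ModuleCat.{0} R) (d : A →ₗ[R] B), ExtProp d V

lemma injMod_of_injective {R : Type} [Ring R] (V : ModuleCat.{0} R) (hV : Injective V) :
    InjMod V := by
  intro A B d f hf
  obtain ⟨f', hf'⟩ := desc_surj d.rangeRestrict d.surjective_rangeRestrict f (by
    intro b hb; exact hf b (by simpa using congrArg Subtype.val hb))
  let m : ModuleCat.of R (LinearMap.range d) ⟶ B := ModuleCat.ofHom (LinearMap.range d).subtype
  have : Mono m := by
    rw [ModuleCat.mono_iff_injective]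
    exact Subtype.val_injective
  let g := Injective.factorThru (J := V) (ModuleCat.ofHom f' : ModuleCat.of R (LinearMap.range d) ⟶ V) m
  have hg : m ≫ g = ModuleCat.ofHom f' := Injective.comp_factorThru _ _
  refine ⟨g.hom, fun a => ?_⟩
  rw [← hf']
  have := congrArg (fun q => q.hom (d.rangeRestrict a)) hg
  exact this

def FinInj (R : Type) [Ring R] : ℕ → ModuleCat.{0} R → Prop
  | 0, V => InjMod V
  | n + 1, V => ∃ (I W : ModuleCat.{0} R) (i : V →ₗ[R] I) (p : I →ₗ[R] W),
      Function.Injective i ∧ Function.Surjective p ∧ Function.Exact i p ∧ InjMod I ∧ FinInj R n W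

lemma FinInj.equiv {R : Type} [Ring R] {n : ℕ} {V W : ModuleCat.{0} R} (e : V ≃ₗ[R] W)
    (h : FinInj R n V) : FinInj R n W := by
  cases n with
  | zero =>
    intro A B d f hf
    obtain ⟨g, hg⟩ := h A B d (e.symm.toLinearMap ∘ₗ f) (by intro a ha; simp [hf a ha])
    exact ⟨e.toLinearMap ∘ₗ g, fun a => by simp [hg]⟩
  | succ n =>
    obtain ⟨I, W', i, p, h1, h2, h3, h4, h5⟩ := h
    refine ⟨I, W', i ∘ₗ e.symm.toLinearMap, p, ?_, h2, ?_, h4, h5⟩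
    · simpa using h1
    · intro y
      rw [h3 y]
      constructor
      · rintro ⟨v, rfl⟩; exact ⟨e v, by simp⟩
      · rintro ⟨v, rfl⟩; exact ⟨e.symm v, by simp⟩

def Ex (R : Type) [Ring R] : ℕ → ∀ (A B : ModuleCat.{0} R), (A →ₗ[R] B) → Prop
  | 0, _, _, _ => True
  | n + 1, _, B, f => ∃ (C : ModuleCat.{0} R) (g : B →ₗ[R] C), Module.Projective R C ∧
      Function.Exact f g ∧ Ex R n B C g

lemma ex_ext {R : Type} [Ring R] : ∀ (n : ℕ) {A B : ModuleCat.{0} R} (d : A →ₗ[R] B)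
    (V : ModuleCat.{0} R), Ex R n A B d → FinInj R n V → ExtProp d V
  | 0, A, B, d, V, _, hV => hV A B d
  | n + 1, A, B, d, V, hd, hV => by
    obtain ⟨C, e, hC, hde, he⟩ := hd
    obtain ⟨I, W, i, p, hi, hp, hip, hI, hW⟩ := hV
    intro f hf
    obtain ⟨g, hg⟩ := hI A B d (i ∘ₗ f) (by intro a ha; simp [hf a ha])
    obtain ⟨k, hk⟩ := ex_ext n e W he hW (p ∘ₗ g) (by
      intro b hb
      obtain ⟨a, rfl⟩ := (hde b).1 hb
      simp only [LinearMap.comp_apply, hg]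
      exact (hip _).2 ⟨_, rfl⟩)
    obtain ⟨k', hk'⟩ := Module.projective_lifting_property p k hp
    obtain ⟨g', hg'⟩ := lift_inj i p hi hip (g - k' ∘ₗ e) (by
      intro b
      have h1 : p (k' (e b)) = k (e b) := LinearMap.congr_fun hk' (e b)
      simp only [LinearMap.sub_apply, LinearMap.comp_apply, map_sub, h1, hk, sub_self])
    refine ⟨g', fun a => hi ?_⟩
    rw [hg']
    have : e (d a) = 0 := (hde _).2 ⟨a, rfl⟩
    simp [this, hg]

/-- syzygies -/
def Syz (R : Type) [Ring R] : ℕ → ModuleCat.{0} R → Prop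
  | 0, V => Module.Finite R V
  | n + 1, V => Module.Finite R V ∧ ∃ (m : ℕ) (W : ModuleCat.{0} R) (i : V →ₗ[R] (Fin m → R))
      (p : (Fin m → R) →ₗ[R] W),
      Function.Injective i ∧ Function.Surjective p ∧ Function.Exact i p ∧ Syz R n W

lemma Syz.finite {R : Type} [Ring R] {n : ℕ} {V : ModuleCat.{0} R} (h : Syz R n V) :
    Module.Finite R V := by
  cases n with
  | zero => exact h
  | succ n => exact h.1

lemma Syz.pred {R : Type} [Ring R] : ∀ {n : ℕ} {V : ModuleCat.{0} R}, Syz R (n + 1) V → Syz R n V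
  | 0, _, h => h.1
  | _ + 1, _, ⟨h, m, W, i, p, h1, h2, h3, h4⟩ => ⟨h, m, W, i, p, h1, h2, h3, h4.pred⟩

lemma Syz.ex {R : Type} [Ring R] : ∀ {n : ℕ} {W : ModuleCat.{0} R}, Syz R n W →
    ∀ {A B : ModuleCat.{0} R} (d : A →ₗ[R] B) (e : B →ₗ[R] W), Function.Exact d e →
    Function.Surjective e → Ex R n A B d
  | 0, _, _, _, _, _, _, _, _ => trivial
  | n + 1, W, ⟨_, m, V, i, p, h1, h2, h3, h4⟩, A, B, d, e, hde, he => by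
    refine ⟨ModuleCat.of R (Fin m → R), i ∘ₗ e, inferInstanceAs (Module.Projective R (Fin m → R)),
      fun b => ?_, h4.ex (B := ModuleCat.of R (Fin m → R)) (i ∘ₗ e) p (fun y => ?_) h2⟩
    · rw [← hde b]
      constructor
      · intro h
        exact h1 (by simpa using h)
      · intro h
        simp [h]
    · rw [h3 y]
      constructor
      · rintro ⟨w, rfl⟩
        obtain ⟨b, rfl⟩ := he w
        exact ⟨b, rfl⟩
      · rintro ⟨b, rfl⟩
        exact ⟨e b, rfl⟩

lemma exists_cover {R : Type} [Ring R] [IsNoetherianRing R] (V : ModuleCat.{0} R)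
    [Module.Finite R V] : ∃ (m : ℕ) (U : ModuleCat.{0} R) (i : U →ₗ[R] (Fin m → R))
      (p : (Fin m → R) →ₗ[R] V), Function.Injective i ∧ Function.Surjective p ∧
      Function.Exact i p ∧ Module.Finite R U := by
  obtain ⟨m, p, hp⟩ := Module.Finite.exists_fin' R V
  exact ⟨m, ModuleCat.of R (LinearMap.ker p), (LinearMap.ker p).subtype, p,
    Subtype.val_injective, hp, LinearMap.exact_subtype_ker_map p, inferInstanceAs (Module.Finite R (LinearMap.ker p))⟩

def CMStep {R : Type} [Ring R] (U V : ModuleCat.{0} R) : Prop :=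
  ∃ (m : ℕ) (i : U →ₗ[R] (Fin m → R)) (p : (Fin m → R) →ₗ[R] V),
    Function.Injective i ∧ Function.Surjective p ∧ Function.Exact i p ∧
    ∀ f : U →ₗ[R] R, ∃ g : (Fin m → R) →ₗ[R] R, ∀ u, g (i u) = f u

/-- Cohen-Macaulay modules, as a greatest fixed point -/
def CM {R : Type} [Ring R] (V : ModuleCat.{0} R) : Prop :=
  ∃ P : ModuleCat.{0} R → Prop, P V ∧ ∀ V, P V → ∃ U, P U ∧ CMStep U V

lemma CM.step {R : Type} [Ring R] {V : ModuleCat.{0} R} (h : CM V) :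
    ∃ U : ModuleCat.{0} R, CM U ∧ CMStep U V := by
  obtain ⟨P, hV, hP⟩ := h
  obtain ⟨U, hU, h⟩ := hP V hV
  exact ⟨U, ⟨P, hU, hP⟩, h⟩

lemma CM.of_step {R : Type} [Ring R] {U V : ModuleCat.{0} R} (h : CM U) (hs : CMStep U V) :
    CM V := by
  refine ⟨fun W => W = V ∨ CM W, Or.inl rfl, ?_⟩
  rintro W (rfl | hW)
  · exact ⟨U, Or.inr h, hs⟩
  · obtain ⟨U', h1, h2⟩ := hW.step
    exact ⟨U', Or.inr h1, h2⟩

lemma Syz.cm {R : Type} [Ring R] [IsNoetherianRing R] {n : ℕ}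
    (hR : FinInj R n (ModuleCat.of R R)) {V : ModuleCat.{0} R} (h : Syz R n V) : CM V := by
  refine ⟨Syz R n, h, fun V hV => ?_⟩
  have := hV.finite
  obtain ⟨m, U, i, p, h1, h2, h3, h4⟩ := exists_cover V
  have hU : Syz R (n + 1) U := ⟨h4, m, V, i, p, h1, h2, h3, hV⟩
  refine ⟨U, hU.pred, m, i, p, h1, h2, h3, fun f => ?_⟩
  have hex : Ex R n U (ModuleCat.of R (Fin m → R)) i := 
    hV.ex (B := ModuleCat.of R (Fin m → R)) i p h3 h2
  obtain ⟨g, hg⟩ := ex_ext n (B := ModuleCat.of R (Fin m → R)) i _ hex hR f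
    (fun a ha => by
      have : a = 0 := h1 (by simpa using ha)
      simp [this])
  exact ⟨g, hg⟩

/-! ### Duality -/

instance smulComm_op (Λ : Type) [Ring Λ] : SMulCommClass Λᵐᵒᵖ Λ Λᵐᵒᵖ where
  smul_comm a b c := by
    apply MulOpposite.unop_injective
    simp [mul_assoc]

abbrev Dual (Λ : Type) [Ring Λ] (M : Type) [AddCommGroup M] [Module Λᵐᵒᵖ M] : Type :=
  M →ₗ[Λᵐᵒᵖ] Λᵐᵒᵖ

abbrev DualC (Λ : Type) [Ring Λ] (m : ℕ) : ModuleCat.{0} Λ :=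
  ModuleCat.of Λ (Dual Λ (Fin m → Λᵐᵒᵖ))

def dualMap (Λ : Type) [Ring Λ] {M N : Type} [AddCommGroup M] [Module Λᵐᵒᵖ M] [AddCommGroup N]
    [Module Λᵐᵒᵖ N] (f : M →ₗ[Λᵐᵒᵖ] N) : Dual Λ N →ₗ[Λ] Dual Λ M :=
  LinearMap.lcomp Λ Λᵐᵒᵖ f

lemma dualMap_apply (Λ : Type) [Ring Λ] {M N : Type} [AddCommGroup M] [Module Λᵐᵒᵖ M]
    [AddCommGroup N] [Module Λᵐᵒᵖ N] (f : M →ₗ[Λᵐᵒᵖ] N) (y : Dual Λ N) (x : M) :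
    dualMap Λ f y x = y (f x) := rfl

def dualEquiv (Λ : Type) [Ring Λ] (m : ℕ) : (Fin m → Λ) ≃ₗ[Λ] Dual Λ (Fin m → Λᵐᵒᵖ) :=
  (LinearEquiv.piCongrRight (fun _ => MulOpposite.opLinearEquiv Λ)).trans
    (LinearEquiv.piRing Λᵐᵒᵖ Λᵐᵒᵖ (Fin m) Λ).symm

lemma dual_projective (Λ : Type) [Ring Λ] (m : ℕ) : Module.Projective Λ (DualC Λ m) :=
  Module.Projective.of_equiv (dualEquiv Λ m)

lemma dual_eval (Λ : Type) [Ring Λ] (m : ℕ) (h : Dual Λ (Fin m → Λᵐᵒᵖ) →ₗ[Λ] Λᵐᵒᵖ) :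
    ∃ b : Fin m → Λᵐᵒᵖ, ∀ y, h y = y b := by
  refine ⟨fun j => h (LinearMap.proj j), fun y => ?_⟩
  have hy : y = ∑ j, (MulOpposite.unop (y (Pi.single j 1))) • (LinearMap.proj j : Dual Λ (Fin m → Λᵐᵒᵖ)) := by
    ext j
    apply MulOpposite.unop_injective
    simp [Pi.single_apply]
  conv_lhs => rw [hy]
  conv_rhs => rw [hy]
  simp [LinearMap.sum_apply]

lemma cm_dual_ex (Λ : Type) [Ring Λ] : ∀ (n : ℕ) (V U : ModuleCat.{0} Λᵐᵒᵖ) (m₀ m₁ : ℕ)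
    (i : U →ₗ[Λᵐᵒᵖ] (Fin m₀ → Λᵐᵒᵖ))
    (_ : ∀ f : U →ₗ[Λᵐᵒᵖ] Λᵐᵒᵖ, ∃ g : (Fin m₀ → Λᵐᵒᵖ) →ₗ[Λᵐᵒᵖ] Λᵐᵒᵖ, ∀ u, g (i u) = f u)
    (W : ModuleCat.{0} Λᵐᵒᵖ) (_ : CM W)
    (j : W →ₗ[Λᵐᵒᵖ] (Fin m₁ → Λᵐᵒᵖ)) (p : (Fin m₁ → Λᵐᵒᵖ) →ₗ[Λᵐᵒᵖ] U)
    (_ : Function.Surjective p) (_ : Function.Exact j p)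
    (_ : ∀ f : W →ₗ[Λᵐᵒᵖ] Λᵐᵒᵖ, ∃ g : (Fin m₁ → Λᵐᵒᵖ) →ₗ[Λᵐᵒᵖ] Λᵐᵒᵖ, ∀ u, g (j u) = f u),
    Ex Λ n (DualC Λ m₀) (DualC Λ m₁) (dualMap Λ (i ∘ₗ p))
  | 0, _, _, _, _, _, _, _, _, _, _, _, _, _ => trivial
  | n + 1, V, U, m₀, m₁, i, hi, W, hW, j, p, hp, hjp, hj => by
    obtain ⟨W', hW', m₂, j', p', h1, h2, h3, h4⟩ := hW.step
    refine ⟨DualC Λ m₂, dualMap Λ (j ∘ₗ p'), dual_projective Λ m₂, ?_,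
      cm_dual_ex Λ n U W m₁ m₂ j hj W' hW' j' p' h2 h3 h4⟩
    intro (y : (Fin m₁ → Λᵐᵒᵖ) →ₗ[Λᵐᵒᵖ] Λᵐᵒᵖ)
    constructor
    · intro hy
      obtain ⟨f, hf⟩ := desc_surj p hp y (by
        intro b hb
        obtain ⟨w, rfl⟩ := (hjp b).1 hb
        obtain ⟨c, rfl⟩ := h2 w
        exact LinearMap.congr_fun hy c)
      obtain ⟨g, hg⟩ := hi f
      refine ⟨g, ?_⟩
      apply LinearMap.ext
      intro x
      change g (i (p x)) = y x
      rw [hg, hf]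
    · rintro ⟨g, rfl⟩
      apply LinearMap.ext
      intro x
      change g (i (p (j (p' x)))) = 0
      rw [(hjp (j (p' x))).2 ⟨_, rfl⟩]
      simp

lemma cm_torsionless (Λ : Type) [Ring Λ] (n : ℕ) (hΛ : FinInj Λ n (ModuleCat.of Λ Λ))
    (V : ModuleCat.{0} Λᵐᵒᵖ) (hV : CM V) (v : V) (hv : ∀ f : V →ₗ[Λᵐᵒᵖ] Λᵐᵒᵖ, f v = 0) :
    v = 0 := by
  obtain ⟨U, hU, m₀, i, p, h1, h2, h3, h4⟩ := hV.step
  obtain ⟨W, hW, m₁, i', p', h1', h2', h3', h4'⟩ := hU.step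
  have hex := cm_dual_ex Λ n V U m₀ m₁ i h4 W hW i' p' h2' h3' h4'
  have hΛ' : FinInj Λ n (ModuleCat.of Λ Λᵐᵒᵖ) :=
    hΛ.equiv (W := ModuleCat.of Λ Λᵐᵒᵖ) (MulOpposite.opLinearEquiv Λ)
  obtain ⟨c, rfl⟩ := h2 v
  obtain ⟨h, hh⟩ := ex_ext n _ _ hex hΛ' (LinearMap.applyₗ' Λ c) (by
    intro (y : (Fin m₀ → Λᵐᵒᵖ) →ₗ[Λᵐᵒᵖ] Λᵐᵒᵖ) hy
    obtain ⟨f, hf⟩ := desc_surj p h2 y (by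
      intro b hb
      obtain ⟨w, rfl⟩ := (h3 b).1 hb
      obtain ⟨c, rfl⟩ := h2' w
      exact LinearMap.congr_fun hy c)
    change y c = 0
    rw [← hf]
    exact hv f)
  obtain ⟨b, hb⟩ := dual_eval Λ m₁ h
  have hc : c = i (p' b) := by
    funext k
    have h5 := hh (LinearMap.proj k : Dual Λ (Fin m₀ → Λᵐᵒᵖ))
    rw [hb] at h5
    exact h5.symm
  rw [hc]
  exact (h3 _).2 ⟨_, rfl⟩

lemma cm_cosyz (Λ : Type) [Ring Λ] [IsNoetherianRing Λ] (n : ℕ)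
    (hΛ : FinInj Λ n (ModuleCat.of Λ Λ))
    (V : ModuleCat.{0} Λᵐᵒᵖ) (hV : CM V) :
    ∃ N : ModuleCat.{0} Λᵐᵒᵖ, CM N ∧ CMStep V N := by
  suffices ∃ N : ModuleCat.{0} Λᵐᵒᵖ, CMStep V N by
    obtain ⟨N, hN⟩ := this
    exact ⟨N, hV.of_step hN, hN⟩
  obtain ⟨U, hU, m₀, i, p, h1, h2, h3, h4⟩ := hV.step
  have hfin : Module.Finite Λ (Dual Λ V) := by
    have : Module.Finite Λ (Dual Λ (Fin m₀ → Λᵐᵒᵖ)) := Module.Finite.equiv (dualEquiv Λ m₀)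
    refine Module.Finite.of_injective (dualMap Λ p) ?_
    intro a b hab
    apply LinearMap.ext
    intro x
    obtain ⟨c, rfl⟩ := h2 x
    exact LinearMap.congr_fun hab c
  obtain ⟨m, s, hs⟩ := Module.Finite.exists_fin (R := Λ) (M := Dual Λ V)
  let j : V →ₗ[Λᵐᵒᵖ] (Fin m → Λᵐᵒᵖ) := LinearMap.pi s
  have hfac : ∀ f : V →ₗ[Λᵐᵒᵖ] Λᵐᵒᵖ, ∃ g : (Fin m → Λᵐᵒᵖ) →ₗ[Λᵐᵒᵖ] Λᵐᵒᵖ, ∀ u, g (j u) = f u := by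
    intro f
    have hf : f ∈ Submodule.span Λ (Set.range s) := by rw [hs]; trivial
    obtain ⟨a, rfl⟩ := (Submodule.mem_span_range_iff_exists_fun Λ).1 hf
    refine ⟨∑ k, a k • (LinearMap.proj k : Dual Λ (Fin m → Λᵐᵒᵖ)), fun u => ?_⟩
    simp [LinearMap.sum_apply, j]
  have hj : Function.Injective j := by
    rw [injective_iff_map_eq_zero]
    intro v hv
    refine cm_torsionless Λ n hΛ V hV v (fun f => ?_)
    obtain ⟨g, hg⟩ := hfac f
    rw [← hg, hv, map_zero]
  exact ⟨ModuleCat.of _ ((Fin m → Λᵐᵒᵖ) ⧸ LinearMap.range j), m, j, (LinearMap.range j).mkQ, hj,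
    Submodule.mkQ_surjective _, LinearMap.exact_map_mkQ_range j, hfac⟩

/-! ### Complexes -/

lemma exactAt_iff_fun {R : Type} [Ring R] (P : CochainComplex (ModuleCat.{0} R) ℤ) (i : ℤ) :
    P.ExactAt (i + 1) ↔ Function.Exact (P.d i (i + 1)).hom (P.d (i + 1) (i + 1 + 1)).hom := by
  rw [HomologicalComplex.exactAt_iff' P i (i + 1) (i + 1 + 1) (by simp) (by simp),
    ShortComplex.ShortExact.moduleCat_exact_iff_function_exact]
  rfl

lemma finInj_of (R : Type) [Ring R] (h : HasFiniteSelfInjDim R) :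
    ∃ n, FinInj R n (ModuleCat.of R R) := by
  obtain ⟨n, I, φ, hI, hz, hq⟩ := h
  refine ⟨n, ?_⟩
  let Z : ℤ → ModuleCat.{0} R := fun j => ModuleCat.of R (LinearMap.ker (I.d j (j + 1)).hom)
  have hex : ∀ j : ℤ, 0 ≤ j → Function.Exact (I.d j (j + 1)).hom (I.d (j + 1) (j + 1 + 1)).hom := by
    intro j hj
    rw [← exactAt_iff_fun]
    rw [← exactAt_iff_of_quasiIsoAt φ]
    apply HomologicalComplex.exactAt_single_obj
    omega
  have key : ∀ k : ℕ, ∀ j : ℤ, 0 ≤ j → j + k = n → FinInj R k (Z j) := by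
    intro k
    induction k with
    | zero =>
      intro j hj hjn
      have hs : Subsingleton (I.X (j + 1)) := ModuleCat.subsingleton_of_isZero (hz _ (by right; simp at hjn; omega))
      have e : I.X j ≃ₗ[R] LinearMap.ker (I.d j (j + 1)).hom :=
        (LinearEquiv.ofTop _ (by
          rw [eq_top_iff]; intro x _; exact Subsingleton.elim _ _)).symm
      have : FinInj R 0 (I.X j) := injMod_of_injective _ (hI j)
      exact this.equiv (W := Z j) e
    | succ k ih =>
      intro j hj hjn
      have := ih (j + 1) (by omega) (by push_cast at hjn; omega)
      refine ⟨I.X j, Z (j + 1), (LinearMap.ker (I.d j (j + 1)).hom).subtype,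
        (I.d j (j + 1)).hom.codRestrict _ (fun x => ((hex j hj) _).2 ⟨x, rfl⟩),
        Subtype.val_injective, ?_, ?_, injMod_of_injective _ (hI j), this⟩
      · rintro ⟨y, hy⟩
        obtain ⟨x, rfl⟩ := ((hex j hj) y).1 hy
        exact ⟨x, rfl⟩
      · intro x
        constructor
        · intro h
          exact ⟨⟨x, congrArg Subtype.val h⟩, rfl⟩
        · rintro ⟨⟨x, hx⟩, rfl⟩
          exact Subtype.ext hx
  have h0 := key n 0 le_rfl (by simp)
  have hq0 : QuasiIsoAt φ 0 := inferInstance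
  rw [quasiIsoAt_iff' φ (-1) 0 1 (by simp) (by simp)] at hq0
  rw [ShortComplex.quasiIso_iff_of_zeros] at hq0
  rotate_left
  · exact (HomologicalComplex.isZero_single_obj_X (ComplexShape.up ℤ) 0 (ModuleCat.of R R) (-1)
      (by decide)).eq_of_src _ _
  · exact (HomologicalComplex.isZero_single_obj_X (ComplexShape.up ℤ) 0 (ModuleCat.of R R) 1
      (by decide)).eq_of_tgt _ _
  · apply (hz _ _).eq_of_src
    left; simp
  obtain ⟨hx, hm⟩ := hq0
  rw [ShortComplex.ShortExact.moduleCat_exact_iff_function_exact] at hx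
  rw [ModuleCat.mono_iff_injective] at hm
  let ψ : ModuleCat.of R R ⟶ I.X 0 :=
    (HomologicalComplex.singleObjXSelf (ComplexShape.up ℤ) 0 (ModuleCat.of R R)).inv ≫ φ.f 0
  have hψ : Function.Injective ψ.hom := by
    rw [← ModuleCat.mono_iff_injective]
    have : Mono (φ.f 0) := by rw [ModuleCat.mono_iff_injective]; exact hm
    infer_instance
  have hψ2 : Function.Exact ψ.hom (I.d 0 1).hom := by
    intro y
    refine (hx y).trans ?_
    constructor
    · rintro ⟨x, rfl⟩
      refine ⟨(HomologicalComplex.singleObjXSelf (ComplexShape.up ℤ) 0 (ModuleCat.of R R)).hom.hom x, ?_⟩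
      have : (HomologicalComplex.singleObjXSelf (ComplexShape.up ℤ) 0 (ModuleCat.of R R)).hom ≫ ψ = φ.f 0 := by simp [ψ]
      exact congrArg (fun q => q.hom x) this
    · rintro ⟨x, rfl⟩
      exact ⟨_, rfl⟩
  have e : R ≃ₗ[R] LinearMap.ker (I.d 0 1).hom := by
    refine (LinearEquiv.ofInjective ψ.hom hψ).trans (LinearEquiv.ofEq _ _ ?_)
    ext y
    exact (hψ2 y).symm
  exact h0.equiv (W := ModuleCat.of R R) e.symm

lemma ExtProp.middle {R : Type} [Ring R] {A B U V W : ModuleCat.{0} R} {d : A →ₗ[R] B}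
    [Module.Projective R B] (i : U →ₗ[R] V) (p : V →ₗ[R] W) (hi : Function.Injective i)
    (hp : Function.Surjective p) (hip : Function.Exact i p)
    (hU : ExtProp d U) (hW : ExtProp d W) : ExtProp d V := by
  intro f hf
  obtain ⟨g, hg⟩ := hW (p ∘ₗ f) (by intro a ha; simp [hf a ha])
  obtain ⟨g', hg'⟩ := Module.projective_lifting_property p g hp
  have hg'' : ∀ b, p (g' b) = g b := LinearMap.congr_fun hg'
  obtain ⟨u, hu⟩ := lift_inj i p hi hip (f - g' ∘ₗ d) (by
    intro b
    simp [hg'', hg])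
  obtain ⟨k, hk⟩ := hU u (by
    intro a ha
    apply hi
    simp [hu, ha, hf a ha])
  refine ⟨g' + i ∘ₗ k, fun a => ?_⟩
  simp [hk, hu]

lemma ExtProp.summand {R : Type} [Ring R] {A B V W : ModuleCat.{0} R} {d : A →ₗ[R] B}
    (s : V →ₗ[R] W) (r : W →ₗ[R] V) (hrs : ∀ v, r (s v) = v) (hW : ExtProp d W) :
    ExtProp d V := by
  intro f hf
  obtain ⟨g, hg⟩ := hW (s ∘ₗ f) (by intro a ha; simp [hf a ha])
  exact ⟨r ∘ₗ g, fun a => by simp [hg, hrs]⟩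

lemma ExtProp.subsingleton {R : Type} [Ring R] {A B V : ModuleCat.{0} R} {d : A →ₗ[R] B}
    [Subsingleton V] : ExtProp d V :=
  fun _ _ => ⟨0, fun _ => Subsingleton.elim _ _⟩

lemma ExtProp.pi {R : Type} [Ring R] {A B : ModuleCat.{0} R} {d : A →ₗ[R] B} (m : ℕ)
    (h : ExtProp d (ModuleCat.of R R)) : ExtProp d (ModuleCat.of R (Fin m → R)) := by
  intro (f : A →ₗ[R] (Fin m → R)) hf
  have := fun k => h (LinearMap.proj k ∘ₗ f) (by
    intro a ha
    change f a k = 0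
    rw [hf a ha]
    rfl)
  choose g hg using this
  refine ⟨LinearMap.pi g, fun a => ?_⟩
  funext k
  exact hg k a

lemma ExtProp.proj {R : Type} [Ring R] {A B : ModuleCat.{0} R} {d : A →ₗ[R] B}
    (h : ExtProp d (ModuleCat.of R R)) (V : ModuleCat.{0} R) [Module.Finite R V]
    [Module.Projective R V] : ExtProp d V := by
  obtain ⟨m, p, hp⟩ := Module.Finite.exists_fin' R V
  obtain ⟨s, hs⟩ := Module.projective_lifting_property p LinearMap.id hp
  exact (h.pi m).summand (W := ModuleCat.of R (Fin m → R)) s p (fun v => LinearMap.congr_fun hs v)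

lemma ExtProp.shift {R : Type} [Ring R] {A B C U F V : ModuleCat.{0} R} {d₀ : A →ₗ[R] B}
    {d₁ : B →ₗ[R] C} [Module.Projective R B] (hd : Function.Exact d₀ d₁)
    (i : U →ₗ[R] F) (p : F →ₗ[R] V) (hi : Function.Injective i)
    (hp : Function.Surjective p) (hip : Function.Exact i p)
    (hU : ExtProp d₀ U) (hF : ExtProp d₁ F) : ExtProp d₁ V := by
  intro f hf
  obtain ⟨f', hf'⟩ := Module.projective_lifting_property p f hp
  have hf'' : ∀ b, p (f' b) = f b := LinearMap.congr_fun hf'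
  obtain ⟨u, hu⟩ := lift_inj i p hi hip (f' ∘ₗ d₀) (by
    intro a
    simp only [LinearMap.comp_apply, hf'']
    exact hf _ ((hd _).2 ⟨a, rfl⟩))
  obtain ⟨k, hk⟩ := hU u (by
    intro a ha
    apply hi
    simp [hu, ha])
  obtain ⟨g, hg⟩ := hF (f' - i ∘ₗ k) (by
    intro b hb
    obtain ⟨a, rfl⟩ := (hd b).1 hb
    simp [hk, hu])
  refine ⟨p ∘ₗ g, fun b => ?_⟩
  have : p (i (k b)) = 0 := (hip _).2 ⟨_, rfl⟩
  simp [hg, hf'', this]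

/-- acyclic complexes of finitely generated projectives -/
structure Acyc {R : Type} [Ring R] (Q : CochainComplex (ModuleCat.{0} R) ℤ) : Prop where
  proj : ∀ i, Module.Projective R (Q.X i)
  fin : ∀ i, Module.Finite R (Q.X i)
  ex : ∀ i j k, i + 1 = j → j + 1 = k → Function.Exact (Q.d i j).hom (Q.d j k).hom

lemma acyc_iff {R : Type} [Ring R] (Q : CochainComplex (ModuleCat.{0} R) ℤ) :
    Acyc Q ↔ (∀ i, Projective (Q.X i) ∧ Module.Finite R (Q.X i)) ∧ (∀ i, Q.ExactAt i) := by
  constructor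
  · rintro ⟨h1, h2, h3⟩
    refine ⟨fun i => ⟨(IsProjective.iff_projective (R := R) (Q.X i)).1 (h1 i), h2 i⟩, fun i => ?_⟩
    obtain ⟨j, rfl⟩ : ∃ j, i = j + 1 := ⟨i - 1, by ring⟩
    rw [exactAt_iff_fun]
    exact h3 _ _ _ rfl rfl
  · rintro ⟨h1, h2⟩
    refine ⟨fun i => (IsProjective.iff_projective (R := R) (Q.X i)).2 (h1 i).1, fun i => (h1 i).2, ?_⟩
    rintro i j k rfl rfl
    rw [← exactAt_iff_fun]
    exact h2 _

lemma Acyc.ex_n {R : Type} [Ring R] {Q : CochainComplex (ModuleCat.{0} R) ℤ} (hQ : Acyc Q) :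
    ∀ (n : ℕ) (i j : ℤ), i + 1 = j → Ex R n (Q.X i) (Q.X j) (Q.d i j).hom
  | 0, _, _, _ => trivial
  | n + 1, i, j, hij => ⟨Q.X (j + 1), (Q.d j (j + 1)).hom, hQ.proj _, hQ.ex _ _ _ hij rfl,
      hQ.ex_n n j (j + 1) rfl⟩

lemma int_chain {A : ℤ → Type*} (Rel : ∀ j k, A j → A k → Prop)
    (hr : ∀ j k, j + 1 = k → ∀ a, ∃ b, Rel j k a b)
    (hl : ∀ j k, j + 1 = k → ∀ b, ∃ a, Rel j k a b) (b : ℤ) (a₀ : A b) :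
    ∃ a : ∀ j, A j, a b = a₀ ∧ ∀ j k, j + 1 = k → Rel j k (a j) (a k) := by
  choose r hr using hr
  choose l hl using hl
  let a : ∀ j, A j := fun j => Int.inductionOn' (motive := A) j b a₀
    (fun k _ x => r k (k + 1) rfl x) (fun k _ x => l (k - 1) k (by ring) x)
  refine ⟨a, Int.inductionOn'_self .., ?_⟩
  rintro j k rfl
  rcases le_or_gt b j with h | h
  · have : a (j + 1) = r j (j + 1) rfl (a j) := Int.inductionOn'_add_one h ..
    rw [this]
    apply hr
  · obtain ⟨k, rfl⟩ : ∃ k, j = k - 1 := ⟨j + 1, by ring⟩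
    have : a (k - 1) = l (k - 1) k (by ring) (a k) := Int.inductionOn'_sub_one (by omega) ..
    have hk : k - 1 + 1 = k := by ring
    have h2 : Rel (k - 1) k (a (k - 1)) (a k) := by
      rw [this]
      apply hl
    convert h2

lemma complete_res (Λ : Type) [Ring Λ] [IsNoetherianRing Λ] (n : ℕ)
    (hΛ : FinInj Λ n (ModuleCat.of Λ Λ))
    (V : ModuleCat.{0} Λᵐᵒᵖ) (hV : CM V) :
    ∃ Y : CochainComplex (ModuleCat.{0} Λᵐᵒᵖ) ℤ, Acyc Y ∧
      ∃ (p : Y.X (-1) →ₗ[Λᵐᵒᵖ] V) (i : V →ₗ[Λᵐᵒᵖ] Y.X 0), Function.Surjective p ∧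
        Function.Injective i ∧ ∀ x, (Y.d (-1) 0).hom x = i (p x) := by
  obtain ⟨W, hW0, hW⟩ := int_chain (A := fun _ => {V : ModuleCat.{0} Λᵐᵒᵖ // CM V})
    (fun _ _ U V => CMStep U.1 V.1)
    (fun _ _ _ U => by
      obtain ⟨N, h1, h2⟩ := cm_cosyz Λ n hΛ U.1 U.2
      exact ⟨⟨N, h1⟩, h2⟩)
    (fun _ _ _ U => by
      obtain ⟨N, h1, h2⟩ := U.2.step
      exact ⟨⟨N, h1⟩, h2⟩) 0 ⟨V, hV⟩
  have hW' := fun j => hW j (j + 1) rfl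
  choose m i p hi hp hip _ using hW'
  let Y : CochainComplex (ModuleCat.{0} Λᵐᵒᵖ) ℤ :=
    CochainComplex.of (fun j => ModuleCat.of Λᵐᵒᵖ (Fin (m j) → Λᵐᵒᵖ))
      (fun j => ModuleCat.ofHom (i (j + 1) ∘ₗ p j)) (by
        intro j
        apply ModuleCat.hom_ext
        apply LinearMap.ext
        intro x
        change i (j + 1 + 1) (p (j + 1) (i (j + 1) (p j x))) = 0
        rw [(hip (j + 1) _).2 ⟨_, rfl⟩, map_zero])
  have hd : ∀ j, Y.d j (j + 1) = ModuleCat.ofHom (i (j + 1) ∘ₗ p j) := by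
    intro j
    exact CochainComplex.of_d (fun j => ModuleCat.of Λᵐᵒᵖ (Fin (m j) → Λᵐᵒᵖ))
      (fun j => ModuleCat.ofHom (i (j + 1) ∘ₗ p j)) j
  refine ⟨Y, ⟨fun j => inferInstanceAs (Module.Projective Λᵐᵒᵖ (Fin (m j) → Λᵐᵒᵖ)),
    fun j => inferInstanceAs (Module.Finite Λᵐᵒᵖ (Fin (m j) → Λᵐᵒᵖ)), ?_⟩, ?_⟩
  · rintro j _ _ rfl rfl
    rw [hd, hd]
    intro (x : Fin (m (j + 1)) → Λᵐᵒᵖ)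
    constructor
    · intro hx
      have hx' : p (j + 1) x = 0 := hi (j + 1 + 1) (by rw [map_zero]; exact hx)
      obtain ⟨w, rfl⟩ := (hip _ _).1 hx'
      obtain ⟨y, rfl⟩ := hp _ w
      exact ⟨y, rfl⟩
    · rintro ⟨y, rfl⟩
      change i (j + 1 + 1) (p (j + 1) (i (j + 1) (p j _))) = 0
      rw [(hip (j + 1) _).2 ⟨_, rfl⟩, map_zero]
  · have key : ∀ j k, j + 1 = k → ∃ (p : Y.X j →ₗ[Λᵐᵒᵖ] (W k).1) (i : (W k).1 →ₗ[Λᵐᵒᵖ] Y.X k),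
        Function.Surjective p ∧ Function.Injective i ∧ ∀ x, (Y.d j k).hom x = i (p x) := by
      rintro j _ rfl
      refine ⟨p j, i (j + 1), hp j, hi (j + 1), fun x => ?_⟩
      rw [hd]
      rfl
    have := key (-1) 0 (by ring)
    rw [hW0] at this
    exact this

lemma van_of_null {R : Type} [Ring R] {Q Y : CochainComplex (ModuleCat.{0} R) ℤ} (hQ : Acyc Q)
    (hY : Acyc Y) (hR : ∀ i j, i + 1 = j → ExtProp (Q.d i j).hom (ModuleCat.of R R))
    (hnull : ∀ φ : Q ⟶ Y, Nonempty (Homotopy φ 0)) (i j : ℤ) (hij : i + 1 = j)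
    (V : ModuleCat.{0} R) (p : Y.X i →ₗ[R] V) (ι : V →ₗ[R] Y.X j) (hp : Function.Surjective p)
    (hι : Function.Injective ι) (hd : ∀ x, (Y.d i j).hom x = ι (p x)) :
    ExtProp (Q.d i j).hom V := by
  intro f hf
  have := hQ.proj
  have := hY.proj
  have := hY.fin
  obtain ⟨φ₀, hφ₀⟩ := Module.projective_lifting_property p f hp
  have hφ₀' : ∀ x, p (φ₀ x) = f x := LinearMap.congr_fun hφ₀
  obtain ⟨a, ha0, ha⟩ := int_chain
    (A := fun j => {φ : Q.X j →ₗ[R] Y.X j // ∀ k l, k + 1 = j → j + 1 = l → ∀ x,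
      (Y.d j l).hom (φ ((Q.d k j).hom x)) = 0})
    (fun j k a b => ∀ x, (Y.d j k).hom (a.1 x) = b.1 ((Q.d j k).hom x))
    (by
      rintro j k hjk ⟨φ, hφ⟩
      obtain ⟨g, hg⟩ := (hR j k hjk).proj (Y.X k) ((Y.d j k).hom ∘ₗ φ) (by
        intro x hx
        obtain ⟨y, rfl⟩ := (hQ.ex (j - 1) j k (by ring) hjk x).1 hx
        exact hφ _ _ (by ring) hjk y)
      refine ⟨⟨g, fun k' l hk' hl x => ?_⟩, fun x => (hg x).symm⟩
      obtain rfl : k' = j := by omega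
      rw [hg]
      exact (hY.ex _ _ _ hjk hl _).2 ⟨_, rfl⟩)
    (by
      rintro j k hjk ⟨φ, hφ⟩
      obtain ⟨g, hg⟩ := Module.projective_lifting_property ((Y.d j k).hom.rangeRestrict)
        ((φ ∘ₗ (Q.d j k).hom).codRestrict _ (fun x =>
          (hY.ex j k (k + 1) hjk rfl _).1 (hφ j (k + 1) hjk rfl x)))
        (LinearMap.surjective_rangeRestrict _)
      have hg' : ∀ x, (Y.d j k).hom (g x) = φ ((Q.d j k).hom x) := fun x =>
        congrArg Subtype.val (LinearMap.congr_fun hg x)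
      refine ⟨⟨g, fun k' l hk' hl x => ?_⟩, hg'⟩
      obtain rfl : l = k := by omega
      rw [hg', (hQ.ex k' j l hk' hjk _).2 ⟨_, rfl⟩, map_zero])
    i ⟨φ₀, by
      intro k l hk hl x
      obtain rfl : l = j := by omega
      rw [hd, hφ₀', hf _ ((hQ.ex k i l hk hl _).2 ⟨_, rfl⟩), map_zero]⟩
  let φ : Q ⟶ Y :=
    { f := fun j => ModuleCat.ofHom (a j).1
      comm' := by
        intro j k hjk
        ext x
        exact ha j k hjk x }
  obtain ⟨H⟩ := hnull φ
  have hH := H.comm i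
  rw [dNext_eq H.hom (show (ComplexShape.up ℤ).Rel i j from hij),
    prevD_eq H.hom (show (ComplexShape.up ℤ).Rel (i - 1) i by simp)] at hH
  refine ⟨p ∘ₗ (H.hom j i).hom, fun x => ?_⟩
  have h1 : (φ.f i).hom x = φ₀ x := by
    change (a i).1 x = _
    rw [ha0]
  rw [hH] at h1
  rw [← hφ₀', ← h1]
  have h2 : p ((Y.d (i - 1) i).hom ((H.hom i (i - 1)).hom x)) = 0 := by
    apply hι
    rw [← hd, map_zero]
    exact (hY.ex (i - 1) i j (by ring) hij _).2 ⟨_, rfl⟩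
  simp [h2]

lemma contractible_of_van {R : Type} [Ring R] [IsNoetherianRing R]
    {Q : CochainComplex (ModuleCat.{0} R) ℤ} (hQ : Acyc Q)
    (h : ∀ i j, i + 1 = j → ∀ V : ModuleCat.{0} R, Module.Finite R V → ExtProp (Q.d i j).hom V) :
    Nonempty (Homotopy (𝟙 Q) 0) := by
  have hfin := hQ.fin
  have hr : ∀ j, ∃ r : Q.X j →ₗ[R] Q.X j, (∀ x, (Q.d j (j + 1)).hom (r x) = 0) ∧
      ∀ x, (Q.d j (j + 1)).hom x = 0 → r x = x := by
    intro j
    have hex := hQ.ex (j - 1) j (j + 1) (by ring) rfl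
    obtain ⟨g, hg⟩ := h (j - 1) j (by ring) (ModuleCat.of R (LinearMap.ker (Q.d j (j + 1)).hom))
      (inferInstanceAs (Module.Finite R (LinearMap.ker (Q.d j (j + 1)).hom)))
      ((Q.d (j - 1) j).hom.codRestrict _ (fun x => (hex _).2 ⟨x, rfl⟩))
      (by intro a ha; exact Subtype.ext ha)
    refine ⟨(LinearMap.ker (Q.d j (j + 1)).hom).subtype ∘ₗ g, fun x => (g x).2, fun x hx => ?_⟩
    obtain ⟨y, rfl⟩ := (hex x).1 hx
    exact congrArg Subtype.val (hg y)
  choose r hr1 hr2 using hr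
  have hs : ∀ i j, i + 1 = j → ∃ s : Q.X j →ₗ[R] Q.X i, ∀ x, s ((Q.d i j).hom x) = x - r i x := by
    rintro i _ rfl
    obtain ⟨g, hg⟩ := h i (i + 1) rfl (Q.X i) (hfin i) (LinearMap.id - r i) (by
      intro x hx
      simp [hr2 i x hx])
    exact ⟨g, fun x => by simpa using hg x⟩
  choose s hs using hs
  let hom : ∀ j i, (ComplexShape.up ℤ).Rel i j → (Q.X j ⟶ Q.X i) := fun j i hij =>
    ModuleCat.ofHom (s i j hij ∘ₗ r j)
  have : 𝟙 Q = Homotopy.nullHomotopicMap' hom := by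
    ext i : 1
    rw [Homotopy.nullHomotopicMap'_f (k₂ := i - 1) (k₁ := i) (k₀ := i + 1) (by simp) (by simp)]
    ext x
    change x = s i (i + 1) rfl (r (i + 1) ((Q.d i (i + 1)).hom x)) +
      (Q.d (i - 1) i).hom (s (i - 1) i (show i - 1 + 1 = i by ring) (r i x))
    rw [hr2 (i + 1) _ ((hQ.ex i (i + 1) (i + 1 + 1) rfl rfl _).2 ⟨_, rfl⟩), hs]
    obtain ⟨y, hy⟩ := (hQ.ex (i - 1) i (i + 1) (by ring) rfl (r i x)).1 (hr1 i x)
    rw [← hy, hs, map_sub]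
    have : (Q.d (i - 1) i).hom (r (i - 1) y) = 0 := by
      have := hr1 (i - 1) y
      have h3 : ∀ k, i - 1 + 1 = k → (Q.d (i - 1) k).hom (r (i - 1) y) = 0 := by
        rintro k rfl; exact this
      exact h3 i (by ring)
    rw [this, sub_zero, sub_add_cancel]
  rw [this]
  exact ⟨Homotopy.nullHomotopy' _⟩

lemma thick_vanish {C : Type*} [Category C] [Preadditive C] [HasZeroObject C] [HasShift C ℤ]
    [∀ n : ℤ, (shiftFunctor C n).Additive] [Pretriangulated C] (M : C) :
    IsThickClass (fun Y : C => ∃ N : ℤ, ∀ n, N ≤ n → ∀ f : M ⟶ Y⟦n⟧, f = 0) where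
  iso := by
    rintro X Y e ⟨N, hN⟩
    refine ⟨N, fun n hn f => ?_⟩
    have := hN n hn (f ≫ e.inv⟦n⟧')
    rw [← cancel_mono (e.inv⟦n⟧'), this, zero_comp]
  shift := by
    rintro X k ⟨N, hN⟩
    refine ⟨N - k, fun n hn f => ?_⟩
    have := hN (k + n) (by omega) (f ≫ (shiftFunctorAdd C k n).inv.app X)
    rw [← cancel_mono ((shiftFunctorAdd C k n).inv.app X), this, zero_comp]
  cone := by
    rintro T hT ⟨N₁, h₁⟩ ⟨N₂, h₂⟩
    refine ⟨max N₁ N₂, fun n hn f => ?_⟩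
    have hT' := Triangle.shift_distinguished T hT n
    have h0 : f ≫ (((CategoryTheory.shiftFunctor (Triangle C) n).obj T).mor₃) = 0 := by
      have h2 : ∀ g : M ⟶ (T.obj₁⟦n⟧)⟦(1 : ℤ)⟧, g = 0 := by
        intro g
        have := h₁ (n + 1) (by omega) (g ≫ (shiftFunctorAdd C n 1).inv.app T.obj₁)
        rw [← cancel_mono ((shiftFunctorAdd C n 1).inv.app T.obj₁), this, zero_comp]
      exact h2 _
    obtain ⟨g, hg⟩ := Triangle.coyoneda_exact₃ _ hT' f h0
    have hg0 : g = 0 := h₂ n (by omega) g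
    rw [hg, hg0]
    exact zero_comp
  retract := by
    rintro X Y i r hir ⟨N, hN⟩
    refine ⟨N, fun n hn f => ?_⟩
    have h := hN n hn (f ≫ i⟦n⟧')
    have h2 : f = f ≫ (i⟦n⟧' ≫ r⟦n⟧') := by
      rw [← CategoryTheory.Functor.map_comp, hir, CategoryTheory.Functor.map_id, Category.comp_id]
    rw [h2, ← Category.assoc, h, zero_comp]

lemma unit_smul_hom {R : Type} [Ring R] (u : ℤˣ) {A B : ModuleCat.{0} R} (f : A ⟶ B) :
    (∀ x, (u • f).hom x = f.hom x) ∨ (∀ x, (u • f).hom x = - f.hom x) := by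
  obtain rfl | rfl := Int.units_eq_one_or u
  · left; intro x; rw [one_smul]
  · right; intro x; rw [Units.neg_smul, one_smul]; rfl

lemma shift_d {R : Type} [Ring R] (Y : CochainComplex (ModuleCat.{0} R) ℤ) (n i j : ℤ) :
    (∀ x : Y.X (i + n), ((Y⟦n⟧).d i j).hom x = (Y.d (i + n) (j + n)).hom x) ∨
    (∀ x : Y.X (i + n), ((Y⟦n⟧).d i j).hom x = (-(Y.d (i + n) (j + n)).hom x : Y.X (j + n))) :=
  unit_smul_hom n.negOnePow (Y.d (i + n) (j + n))

lemma Acyc.shift {R : Type} [Ring R] {Y : CochainComplex (ModuleCat.{0} R) ℤ} (hY : Acyc Y)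
    (n : ℤ) : Acyc (Y⟦n⟧) where
  proj i := hY.proj (i + n)
  fin i := hY.fin (i + n)
  ex := by
    intro i j k hij hjk
    have h := hY.ex (i + n) (j + n) (k + n) (by omega) (by omega)
    intro (x : Y.X (j + n))
    have h2 : ((Y⟦n⟧).d j k).hom x = 0 ↔ (Y.d (j + n) (k + n)).hom x = 0 := by
      obtain h | h := shift_d Y n j k
      · rw [h]; rfl
      · rw [h]; exact neg_eq_zero
    refine h2.trans ((h x).trans ?_)
    obtain h | h := shift_d Y n i j
    · constructor
      · rintro ⟨y, rfl⟩
        exact ⟨y, h y⟩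
      · rintro ⟨y, rfl⟩
        exact ⟨y, (h y).symm⟩
    · constructor
      · rintro ⟨y, rfl⟩
        refine ⟨(-y : Y.X (i + n)), (h _).trans ?_⟩
        rw [map_neg, neg_neg]
      · rintro ⟨y, rfl⟩
        exact ⟨(-y : Y.X (i + n)), (map_neg _ _).trans (h y).symm⟩

lemma null_of_silting {R : Type} [Ring R] {X : HtpyCat R} (hX : IsSiltingFor (IsCMStableObj R) X)
    {Q : CochainComplex (ModuleCat.{0} R) ℤ} (e : X ≅ ofComplex R Q)
    {Y : CochainComplex (ModuleCat.{0} R) ℤ} (hY : Acyc Y) :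
    ∃ N : ℤ, ∀ n, N ≤ n → ∀ φ : Q ⟶ Y⟦n⟧, Nonempty (Homotopy φ 0) := by
  have hYS : IsCMStableObj R (ofComplex R Y) :=
    ⟨Y, ((acyc_iff Y).1 hY).1, ((acyc_iff Y).1 hY).2, ⟨Iso.refl _⟩⟩
  obtain ⟨N, hN⟩ := hX.2.2 _ hYS _ (thick_vanish X) (by
    rintro _ rfl
    exact ⟨1, fun n hn f => hX.2.1 n (by omega) f⟩)
  refine ⟨N, fun n hn φ => ?_⟩
  let q := HomotopyCategory.quotient (ModuleCat.{0} R) (ComplexShape.up ℤ)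
  have h := hN n hn (e.hom ≫ q.map φ ≫ (q.commShiftIso n).hom.app Y)
  have h2 : q.map φ = 0 := by
    rw [← cancel_mono ((q.commShiftIso n).hom.app Y), zero_comp]
    exact (cancel_epi e.hom).1 (h.trans comp_zero.symm)
  exact ⟨HomotopyCategory.homotopyOfEq _ _ (by
    rw [Functor.map_zero]; exact h2)⟩

lemma van_cm {Λ : Type} [Ring Λ] [IsNoetherianRing Λ] (n : ℕ)
    (hΛ : FinInj Λ n (ModuleCat.of Λ Λ)) {X : HtpyCat Λᵐᵒᵖ}
    (hX : IsSiltingFor (IsCMStableObj Λᵐᵒᵖ) X)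
    {Q : CochainComplex (ModuleCat.{0} Λᵐᵒᵖ) ℤ} (e : X ≅ ofComplex Λᵐᵒᵖ Q) (hQ : Acyc Q)
    (hR : ∀ i j, i + 1 = j → ExtProp (Q.d i j).hom (ModuleCat.of Λᵐᵒᵖ Λᵐᵒᵖ))
    (V : ModuleCat.{0} Λᵐᵒᵖ) (hV : CM V) :
    ∃ i₀ : ℤ, ∀ i j, i + 1 = j → i ≤ i₀ → ExtProp (Q.d i j).hom V := by
  obtain ⟨Y, hY, hf⟩ := complete_res Λ n hΛ V hV
  obtain ⟨N, hN⟩ := null_of_silting hX e hY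
  refine ⟨-N - 1, fun i j hij hi => ?_⟩
  have key : ∀ a b : ℤ, a = -1 → b = 0 → ∃ (p : Y.X a →ₗ[Λᵐᵒᵖ] V) (ι : V →ₗ[Λᵐᵒᵖ] Y.X b),
      Function.Surjective p ∧ Function.Injective ι ∧ ∀ x, (Y.d a b).hom x = ι (p x) := by
    rintro _ _ rfl rfl
    exact hf
  obtain ⟨p, ι, hp, hι, hd⟩ := key (i + (-i - 1)) (j + (-i - 1)) (by ring) (by omega)
  have hn := hN (-i - 1) (by omega)
  obtain h | h := shift_d Y (-i - 1) i j
  · exact van_of_null hQ (hY.shift (-i - 1)) hR hn i j hij V p ι hp hι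
      (fun x => (h x).trans (hd x))
  · refine van_of_null hQ (hY.shift (-i - 1)) hR hn i j hij V p (-ι) hp
      (fun x y hxy => hι (neg_injective hxy)) ?_
    exact fun x => (h x).trans (congrArg Neg.neg (hd x))

lemma van_syz {Λ : Type} [Ring Λ] [IsNoetherianRing Λᵐᵒᵖ] (d : ℕ)
    (hd : FinInj Λᵐᵒᵖ d (ModuleCat.of Λᵐᵒᵖ Λᵐᵒᵖ))
    {Q : CochainComplex (ModuleCat.{0} Λᵐᵒᵖ) ℤ} (hQ : Acyc Q)
    (hR : ∀ i j, i + 1 = j → ExtProp (Q.d i j).hom (ModuleCat.of Λᵐᵒᵖ Λᵐᵒᵖ))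
    (hcm : ∀ V : ModuleCat.{0} Λᵐᵒᵖ, CM V →
      ∃ i₀ : ℤ, ∀ i j, i + 1 = j → i ≤ i₀ → ExtProp (Q.d i j).hom V) :
    ∀ (k n : ℕ), n + k = d → ∀ V : ModuleCat.{0} Λᵐᵒᵖ, Syz Λᵐᵒᵖ n V →
      ∃ i₀ : ℤ, ∀ i j, i + 1 = j → i ≤ i₀ → ExtProp (Q.d i j).hom V := by
  intro k
  induction k with
  | zero =>
    rintro n rfl V hV
    exact hcm V (hV.cm hd)
  | succ k ih =>
    intro n hn V hV
    have := hV.finite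
    obtain ⟨m, U, i, p, h1, h2, h3, h4⟩ := exists_cover V
    obtain ⟨i₀, hi₀⟩ := ih (n + 1) (by omega) U ⟨h4, m, V, i, p, h1, h2, h3, hV⟩
    refine ⟨i₀ + 1, fun a b hab ha => ?_⟩
    have := hQ.proj
    exact ExtProp.shift (F := ModuleCat.of Λᵐᵒᵖ (Fin m → Λᵐᵒᵖ)) (hQ.ex (a - 1) a b (by ring) hab)
      i p h1 h2 h3 (hi₀ (a - 1) a (by ring) (by omega)) ((hR a b hab).pi m)

lemma van_unif {R : Type} [Ring R] [IsArtinianRing R]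
    {Q : CochainComplex (ModuleCat.{0} R) ℤ} (hQ : Acyc Q) (i j : ℤ)
    (h : ExtProp (Q.d i j).hom (ModuleCat.of R (R ⧸ Ring.jacobson R)))
    (V : ModuleCat.{0} R) (hV : Module.Finite R V) : ExtProp (Q.d i j).hom V := by
  have := hQ.proj
  have hsimple : ∀ (S : Type) [AddCommGroup S] [Module R S], IsSimpleModule R S →
      ExtProp (Q.d i j).hom (ModuleCat.of R S) := by
    intro S _ _ hS
    have := IsSimpleModule.nontrivial R S
    obtain ⟨x, hx⟩ := exists_ne (0 : S)
    have hsurj := IsSimpleModule.toSpanSingleton_surjective R hx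
    have hle : Ring.jacobson R ≤ LinearMap.ker (LinearMap.toSpanSingleton R S x) := by
      have hm := IsSimpleModule.ker_toSpanSingleton_isMaximal R hx
      rw [Ring.jacobson_eq_sInf_isMaximal]
      exact sInf_le hm
    let p : (R ⧸ Ring.jacobson R) →ₗ[R] S := Submodule.liftQ _ _ hle
    have hp : Function.Surjective p := by
      intro y
      obtain ⟨r, rfl⟩ := hsurj y
      exact ⟨Submodule.Quotient.mk r, rfl⟩
    have hss : IsSemisimpleModule R (R ⧸ Ring.jacobson R) :=
      (IsArtinian.isSemisimpleModule_iff_jacobson R _).2 (Module.jacobson_quotient_jacobson R R)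
    obtain ⟨s, hs⟩ : ∃ s : S →ₗ[R] (R ⧸ Ring.jacobson R), p ∘ₗ s = LinearMap.id :=
      IsSemisimpleModule.lifting_property p hp _
    exact h.summand (W := ModuleCat.of R (R ⧸ Ring.jacobson R)) s p (LinearMap.congr_fun hs)
  have key : ∀ (V : Type) [AddCommGroup V] [Module R V], IsFiniteLength R V →
      ExtProp (Q.d i j).hom (ModuleCat.of R V) := by
    intro V _ _ hV
    induction hV with
    | of_subsingleton => exact ExtProp.subsingleton
    | @of_simple_quotient M _ _ N hs hN ih =>
      exact ExtProp.middle (U := ModuleCat.of R N) (W := ModuleCat.of R (M ⧸ N)) N.subtype N.mkQ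
        N.injective_subtype N.mkQ_surjective (LinearMap.exact_subtype_mkQ N) ih (hsimple _ hs)
  exact key V ((isFiniteLength_iff_isNoetherian_isArtinian).2 ⟨inferInstance, inferInstance⟩)

lemma van_all {R : Type} [Ring R] [IsNoetherianRing R]
    {Q : CochainComplex (ModuleCat.{0} R) ℤ} (hQ : Acyc Q)
    (hR : ∀ i j, i + 1 = j → ExtProp (Q.d i j).hom (ModuleCat.of R R)) (i₀ : ℤ)
    (h : ∀ i j, i + 1 = j → i ≤ i₀ → ∀ V : ModuleCat.{0} R, Module.Finite R V →
      ExtProp (Q.d i j).hom V) :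
    ∀ i j, i + 1 = j → ∀ V : ModuleCat.{0} R, Module.Finite R V → ExtProp (Q.d i j).hom V := by
  have := hQ.proj
  have key : ∀ (k : ℕ) (i j : ℤ), i + 1 = j → i ≤ i₀ + k → ∀ V : ModuleCat.{0} R,
      Module.Finite R V → ExtProp (Q.d i j).hom V := by
    intro k
    induction k with
    | zero => intro i j hij hi; exact h i j hij (by simpa using hi)
    | succ k ih =>
      intro a b hab ha V hV
      obtain ⟨m, U, i, p, h1, h2, h3, h4⟩ := exists_cover V
      push_cast at ha
      exact ExtProp.shift (F := ModuleCat.of R (Fin m → R)) (hQ.ex (a - 1) a b (by ring) hab)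
        i p h1 h2 h3 (ih (a - 1) a (by ring) (by omega) U h4) ((hR a b hab).pi m)
  intro i j hij
  exact key (i - i₀).toNat i j hij (by omega)

/-- Corollary 2.3 of the paper.  Let `Λ` be an
Iwanaga–Gorenstein finite-dimensional algebra over an algebraically closed
field `K`, i.e. `Λ` has finite self-injective dimension as a right and as a
left module.  Then the stable category of Cohen–Macaulay `Λ`-modules (modelled,
following Buchweitz, by the homotopy category of acyclic complexes of finitely
generated projective right `Λ`-modules) admits no non-zero silting object. -/
theorem stable_CM_category_has_no_nonzero_silting
    (K Λ : Type) [Field K] [IsAlgClosed K] [Ring Λ] [Algebra K Λ] [FiniteDimensional K Λ]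
    (hright : HasFiniteSelfInjDim Λᵐᵒᵖ) (hleft : HasFiniteSelfInjDim Λ) :
    ∀ X : HtpyCat Λᵐᵒᵖ, IsSiltingFor (IsCMStableObj Λᵐᵒᵖ) X → IsZero X := by
  have : Module.Finite K Λᵐᵒᵖ := Module.Finite.equiv (MulOpposite.opLinearEquiv K (M := Λ))
  have : IsNoetherianRing Λ := isNoetherian_of_tower K inferInstance
  have : IsNoetherianRing Λᵐᵒᵖ := isNoetherian_of_tower K inferInstance
  have : IsArtinianRing Λᵐᵒᵖ := isArtinian_of_tower K inferInstance
  intro X hX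
  obtain ⟨Q, hQ1, hQ2, ⟨e⟩⟩ := hX.1
  have hQ : Acyc Q := (acyc_iff Q).2 ⟨hQ1, hQ2⟩
  obtain ⟨d, hd⟩ := finInj_of _ hright
  obtain ⟨n, hn⟩ := finInj_of _ hleft
  have hR : ∀ i j, i + 1 = j → ExtProp (Q.d i j).hom (ModuleCat.of Λᵐᵒᵖ Λᵐᵒᵖ) :=
    fun i j hij => ex_ext d _ _ (hQ.ex_n d i j hij) hd
  obtain ⟨i₀, hi₀⟩ := van_syz d hd hQ hR (van_cm n hn hX e hQ hR) d 0 (by simp)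
    (ModuleCat.of Λᵐᵒᵖ (Λᵐᵒᵖ ⧸ Ring.jacobson Λᵐᵒᵖ))
    (inferInstanceAs (Module.Finite Λᵐᵒᵖ (Λᵐᵒᵖ ⧸ Ring.jacobson Λᵐᵒᵖ)))
  obtain ⟨H⟩ := contractible_of_van hQ (van_all hQ hR i₀ (fun i j hij hi V hV =>
    van_unif hQ i j (hi₀ i j hij hi) V hV))
  have h0 : IsZero (ofComplex Λᵐᵒᵖ Q) := by
    rw [IsZero.iff_id_eq_zero]
    have := HomotopyCategory.eq_of_homotopy _ _ H
    rw [CategoryTheory.Functor.map_id, Functor.map_zero] at this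
    exact this
  exact h0.of_iso e

end PaperSilting
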